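/- arXiv:2404.19053 — 2 statements merged into one kernel-verified Lean document; each statement's English description precedes it below -/
import Mathlib

section
/- For all real numbers s > 0 and y > 0, the horizontal-ray and vertical-ray contour representations of the upper incomplete Gamma function at imaginary argument agree: ∫_0^∞ (iy + t)^{-s-1} e^{-(iy+t)} dt = i ∫_y^∞ (iu)^{-s-1} e^{-iu} du, where complex powers are taken with the principal branch. -/
open MeasureTheory Real

open Filter Topology Set

/-- The integrand `z ^ (-s - 1) * exp (-z)` of the upper incomplete Gamma function `Γ(-s, ·)`. -/
noncomputable def incGammaIntegrand (s : ℝ) (z : ℂ) : ℂ :=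
  z ^ (-(s : ℂ) - 1) * Complex.exp (-z)

lemma differentiableAt_incGammaIntegrand (s : ℝ) {z : ℂ} (hz : z ∈ Complex.slitPlane) :
    DifferentiableAt ℂ (incGammaIntegrand s) z :=
  (differentiableAt_id.cpow_const hz).mul differentiableAt_id.neg.cexp

lemma norm_incGammaIntegrand_le {s r : ℝ} {z : ℂ} (hs : 0 < s) (hr : 0 < r) (hz : r ≤ ‖z‖) :
    ‖incGammaIntegrand s z‖ ≤ r ^ (-s - 1) * exp (-z.re) := by
  have hexp : (-(s : ℂ) - 1) = ((-s - 1 : ℝ) : ℂ) := by push_cast; ring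
  rw [incGammaIntegrand, norm_mul, hexp, Complex.norm_cpow_real, Complex.norm_exp, Complex.neg_re]
  exact mul_le_mul_of_nonneg_right (rpow_le_rpow_of_nonpos hr hz (by linarith)) (exp_pos _).le

lemma norm_incGammaIntegrand_le_rpow {s r : ℝ} {z : ℂ} (hs : 0 < s) (hr : 0 < r) (hz : r ≤ ‖z‖)
    (hre : 0 ≤ z.re) : ‖incGammaIntegrand s z‖ ≤ r ^ (-s - 1) :=
  (norm_incGammaIntegrand_le hs hr hz).trans <|
    mul_le_of_le_one_right (rpow_nonneg hr.le _) (exp_le_one_iff.2 (by linarith))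

lemma integrableOn_incGammaIntegrand_horizontal {s y : ℝ} (hs : 0 < s) (hy : 0 < y) :
    IntegrableOn (fun t : ℝ => incGammaIntegrand s (t + y * Complex.I)) (Ioi 0) := by
  have hcont : Continuous fun t : ℝ => incGammaIntegrand s (t + y * Complex.I) := by
    refine continuous_iff_continuousAt.2 fun t => ?_
    refine ContinuousAt.comp (f := fun t : ℝ => (t : ℂ) + y * Complex.I)
      (differentiableAt_incGammaIntegrand s ?_).continuousAt (by fun_prop)
    exact Or.inr (by simpa using hy.ne')
  refine Integrable.mono' ((exp_neg_integrableOn_Ioi 0 one_pos).const_mul (y ^ (-s - 1)))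
    hcont.aestronglyMeasurable (ae_of_all _ fun t => ?_)
  refine (norm_incGammaIntegrand_le hs hy ?_).trans_eq (by simp)
  simpa using (le_abs_self _).trans (Complex.abs_im_le_norm ((t : ℂ) + y * Complex.I))

lemma integrableOn_incGammaIntegrand_vertical {s y : ℝ} (hs : 0 < s) (hy : 0 < y) :
    IntegrableOn (fun u : ℝ => incGammaIntegrand s (u * Complex.I)) (Ioi y) := by
  have hcont : ContinuousOn (fun u : ℝ => incGammaIntegrand s (u * Complex.I)) (Ioi y) := by
    refine continuousOn_of_forall_continuousAt fun u hu => ?_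
    refine ContinuousAt.comp (f := fun u : ℝ => (u : ℂ) * Complex.I)
      (differentiableAt_incGammaIntegrand s ?_).continuousAt (by fun_prop)
    exact Or.inr (by simpa using (hy.trans hu).ne')
  refine Integrable.mono' (integrableOn_Ioi_rpow_of_lt (a := -s - 1) (by linarith) hy)
    (hcont.aestronglyMeasurable measurableSet_Ioi) ?_
  filter_upwards [ae_restrict_mem measurableSet_Ioi] with u hu
  exact norm_incGammaIntegrand_le_rpow hs (hy.trans hu) (by simp [le_abs_self]) (by simp)

/-- The contour integrals from `iy` to `R + iy` and from `iy` to `iR` differ by the integrals over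
the two far sides of a rectangle, which are `O(R ^ (-s))`. -/
lemma norm_incGammaIntegrand_horizontal_sub_vertical_le {s y R : ℝ} (hs : 0 < s) (hy : 0 < y)
    (hR : y ≤ R) :
    ‖(∫ t : ℝ in (0 : ℝ)..R, incGammaIntegrand s (t + y * Complex.I)) -
      Complex.I * ∫ u : ℝ in y..R, incGammaIntegrand s (u * Complex.I)‖ ≤ 2 * R ^ (-s) := by
  have hR0 : 0 < R := hy.trans_le hR
  have hrect := Complex.integral_boundary_rect_eq_zero_of_differentiableOn (incGammaIntegrand s)
    ⟨0, y⟩ ⟨R, R⟩ fun z hz => by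
      refine (differentiableAt_incGammaIntegrand s (Or.inr ?_)).differentiableWithinAt
      have him : z.im ∈ uIcc y R := hz.2
      rw [uIcc_of_le hR] at him
      exact (hy.trans_le him.1).ne'
  simp only [Complex.ofReal_zero, zero_add, smul_eq_mul] at hrect
  have htop : ‖∫ t : ℝ in (0 : ℝ)..R, incGammaIntegrand s (t + R * Complex.I)‖ ≤
      R ^ (-s - 1) * |R - 0| := by
    refine intervalIntegral.norm_integral_le_of_norm_le_const fun t ht => ?_
    rw [uIoc_of_le hR0.le] at ht
    refine norm_incGammaIntegrand_le_rpow hs hR0 ?_ (by simpa using ht.1.le)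
    simpa using (le_abs_self _).trans (Complex.abs_im_le_norm ((t : ℂ) + R * Complex.I))
  have hright : ‖∫ u : ℝ in y..R, incGammaIntegrand s (R + u * Complex.I)‖ ≤
      R ^ (-s - 1) * |R - y| := by
    refine intervalIntegral.norm_integral_le_of_norm_le_const fun u _ => ?_
    refine norm_incGammaIntegrand_le_rpow hs hR0 ?_ (by simpa using hR0.le)
    simpa using (le_abs_self _).trans (Complex.abs_re_le_norm ((R : ℂ) + u * Complex.I))
  have hpow : R ^ (-s - 1) * R = R ^ (-s) := by
    rw [← rpow_add_one hR0.ne', sub_add_cancel]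
  rw [sub_zero, abs_of_pos hR0] at htop
  rw [abs_of_nonneg (sub_nonneg.2 hR)] at hright
  have hnonneg : 0 ≤ R ^ (-s - 1) * y := by positivity
  calc _ = ‖(∫ t : ℝ in (0 : ℝ)..R, incGammaIntegrand s (t + R * Complex.I)) -
        Complex.I * ∫ u : ℝ in y..R, incGammaIntegrand s (R + u * Complex.I)‖ := by
        congr 1
        linear_combination hrect
    _ ≤ _ := norm_sub_le _ _
    _ ≤ 2 * R ^ (-s) := by
        rw [norm_mul, Complex.norm_I, one_mul]
        linarith

lemma integral_incGammaIntegrand_horizontal_eq_vertical {s y : ℝ} (hs : 0 < s) (hy : 0 < y) :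
    ∫ t in Ioi (0 : ℝ), incGammaIntegrand s (t + y * Complex.I) =
      Complex.I * ∫ u in Ioi y, incGammaIntegrand s (u * Complex.I) := by
  have hlim := (intervalIntegral_tendsto_integral_Ioi 0
    (integrableOn_incGammaIntegrand_horizontal hs hy) tendsto_id).sub
    ((intervalIntegral_tendsto_integral_Ioi y
      (integrableOn_incGammaIntegrand_vertical hs hy) tendsto_id).const_mul Complex.I)
  have hbound : Tendsto (fun R : ℝ => 2 * R ^ (-s)) atTop (𝓝 0) := by
    simpa using (tendsto_rpow_neg_atTop hs).const_mul 2
  refine sub_eq_zero.1 (tendsto_nhds_unique hlim (squeeze_zero_norm' ?_ hbound))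
  filter_upwards [eventually_ge_atTop y] with R hR
  exact norm_incGammaIntegrand_horizontal_sub_vertical_le hs hy hR

/-- For all real `s > 0` and `y > 0`, the horizontal-ray and vertical-ray contour
representations of the upper incomplete Gamma function at imaginary argument agree:
`∫_0^∞ (iy + t)^(-s-1) e^{-(iy+t)} dt = i ∫_y^∞ (iu)^(-s-1) e^{-iu} du`,
with principal branches of the complex powers. -/
theorem inc_gamma_contour_deformation (s y : ℝ) (hs : 0 < s) (hy : 0 < y) :
    (∫ t in Set.Ioi (0 : ℝ),
        (Complex.I * (y : ℂ) + (t : ℂ)) ^ (-(s : ℂ) - 1)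
          * Complex.exp (-(Complex.I * (y : ℂ) + (t : ℂ))))
      = Complex.I * ∫ u in Set.Ioi y,
          (Complex.I * (u : ℂ)) ^ (-(s : ℂ) - 1) * Complex.exp (-(Complex.I * (u : ℂ))) := by
  simpa only [incGammaIntegrand, mul_comm _ Complex.I, add_comm _ (Complex.I * (y : ℂ))] using
    integral_incGammaIntegrand_horizontal_eq_vertical hs hy
end

section
/- Fix real numbers r ≥ 0, φ, ρ > 0, ν > 0, and α₀ ∈ (0, 1). Define F(α) := ∫_0^∞ ω^{−α} φ²(ρ² + ω²)^{−ν−1/2} cos(2πωr) dω for α ∈ (0, 1). Then F is differentiable at α₀ with derivative F′(α₀) = −∫_0^∞ ω^{−α₀} log(ω) φ²(ρ² + ω²)^{−ν−1/2} cos(2πωr) dω; that is, differentiation with respect to the singularity parameter α may be exchanged with the Fourier integration. -/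
open MeasureTheory Real

open Filter Topology Asymptotics

/-- The complex Mellin transform of a real function at a real point is the real Mellin integral. -/
lemma mellin_ofReal_one_sub (g : ℝ → ℝ) (α : ℝ) :
    mellin (fun t => (g t : ℂ)) (1 - (α : ℂ)) =
      ((∫ t in Set.Ioi (0 : ℝ), t ^ (-α) * g t : ℝ) : ℂ) := by
  rw [mellin, ← integral_complex_ofReal]
  refine setIntegral_congr_fun measurableSet_Ioi fun t ht => ?_
  have hα : (1 - (α : ℂ) - 1) = ((-α : ℝ) : ℂ) := by push_cast; ring
  simp only [smul_eq_mul, hα, Complex.ofReal_mul, Complex.ofReal_cpow (le_of_lt ht)]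

/-- Differentiation of a real Mellin integral `∫ t ^ (-α) g t` in the exponent `α`. -/
lemma hasDerivAt_integral_rpow_neg_mul {g : ℝ → ℝ} {a b α₀ : ℝ}
    (hg : LocallyIntegrableOn g (Set.Ioi 0)) (h_top : g =O[atTop] (· ^ (-a)))
    (ha : 1 - α₀ < a) (h_bot : g =O[𝓝[>] 0] (· ^ (-b))) (hb : b < 1 - α₀) :
    HasDerivAt (fun α : ℝ => ∫ t in Set.Ioi (0 : ℝ), t ^ (-α) * g t)
      (-∫ t in Set.Ioi (0 : ℝ), t ^ (-α₀) * (Real.log t * g t)) α₀ := by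
  have hre : (1 - (α₀ : ℂ)).re = 1 - α₀ := by simp
  have hgc : LocallyIntegrableOn (fun t => (g t : ℂ)) (Set.Ioi 0) := fun x hx =>
    let ⟨u, hu, hgu⟩ := hg x hx
    ⟨u, hu, hgu.ofReal⟩
  have h_deriv := (mellin_hasDerivAt_of_isBigO_rpow (s := 1 - (α₀ : ℂ)) hgc
    (IsBigO.of_norm_left (by simpa using h_top.norm_left)) (hre ▸ ha)
    (IsBigO.of_norm_left (by simpa using h_bot.norm_left)) (hre ▸ hb)).2
  have h_comp := (h_deriv.comp (α₀ : ℂ) ((hasDerivAt_id (α₀ : ℂ)).const_sub 1)).real_of_complex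
  have h_log : (fun t : ℝ => Real.log t • (g t : ℂ)) =
      fun t => ((Real.log t * g t : ℝ) : ℂ) := by
    ext t; simp
  simpa only [Function.comp_def, id, h_log, mellin_ofReal_one_sub, Complex.ofReal_re, mul_neg,
    mul_one, Complex.neg_re] using h_comp

/-- Fix `r ≥ 0`, `φ`, `ρ > 0`, `ν > 0`, and `α₀ ∈ (0, 1)`. Then the map
`α ↦ ∫_0^∞ ω^(−α) φ²(ρ² + ω²)^(−ν−1/2) cos(2πωr) dω` is differentiable at `α₀` with
derivative `−∫_0^∞ ω^(−α₀) log ω φ²(ρ² + ω²)^(−ν−1/2) cos(2πωr) dω`. -/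
theorem singular_matern_deriv_in_alpha (r φ ρ ν α₀ : ℝ) (hr : 0 ≤ r) (hρ : 0 < ρ)
    (hν : 0 < ν) (hα : α₀ ∈ Set.Ioo (0 : ℝ) 1) :
    HasDerivAt
      (fun α : ℝ => ∫ ω in Set.Ioi (0 : ℝ),
        ω ^ (-α) * (φ ^ 2 * (ρ ^ 2 + ω ^ 2) ^ (-ν - 1 / 2)) * Real.cos (2 * π * ω * r))
      (-∫ ω in Set.Ioi (0 : ℝ),
        ω ^ (-α₀) * Real.log ω * (φ ^ 2 * (ρ ^ 2 + ω ^ 2) ^ (-ν - 1 / 2))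
          * Real.cos (2 * π * ω * r))
      α₀ := by
  set g : ℝ → ℝ := fun ω =>
    φ ^ 2 * (ρ ^ 2 + ω ^ 2) ^ (-ν - 1 / 2) * Real.cos (2 * π * ω * r) with hg_def
  have h_pos (ω : ℝ) : 0 < ρ ^ 2 + ω ^ 2 := by positivity
  have hg : Continuous g :=
    (continuous_const.mul ((by fun_prop : Continuous fun ω : ℝ => ρ ^ 2 + ω ^ 2).rpow_const
      fun ω => Or.inl (h_pos ω).ne')).mul (by fun_prop)
  have h_top : g =O[atTop] (· ^ (-(2 * ν + 1))) := by
    refine IsBigO.of_bound (φ ^ 2) ?_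
    filter_upwards [eventually_gt_atTop 0] with ω hω
    have h_le : (ρ ^ 2 + ω ^ 2) ^ (-ν - 1 / 2) ≤ ω ^ (-(2 * ν + 1)) := calc
      (ρ ^ 2 + ω ^ 2) ^ (-ν - 1 / 2) ≤ (ω ^ 2) ^ (-ν - 1 / 2) :=
        Real.rpow_le_rpow_of_nonpos (by positivity) (by nlinarith) (by linarith)
      _ = ω ^ (-(2 * ν + 1)) := by
        rw [← Real.rpow_natCast_mul hω.le]
        congr 1
        push_cast
        ring
    have h_nonneg := Real.rpow_nonneg (h_pos ω).le (-ν - 1 / 2)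
    rw [hg_def, norm_mul, norm_mul, Real.norm_of_nonneg (sq_nonneg φ),
      Real.norm_of_nonneg h_nonneg, Real.norm_of_nonneg (Real.rpow_nonneg hω.le _)]
    calc φ ^ 2 * (ρ ^ 2 + ω ^ 2) ^ (-ν - 1 / 2) * ‖Real.cos (2 * π * ω * r)‖
        ≤ φ ^ 2 * (ρ ^ 2 + ω ^ 2) ^ (-ν - 1 / 2) :=
          mul_le_of_le_one_right (by positivity) (Real.abs_cos_le_one _)
      _ ≤ φ ^ 2 * ω ^ (-(2 * ν + 1)) := by gcongr
  have h_bot : g =O[𝓝[>] 0] (· ^ (-(0 : ℝ))) := by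
    simpa using (hg.tendsto 0).isBigO_one ℝ |>.mono nhdsWithin_le_nhds
  have h_deriv := hasDerivAt_integral_rpow_neg_mul (α₀ := α₀)
    (hg.locallyIntegrable.locallyIntegrableOn _) h_top (by linarith [hα.1]) h_bot
    (by linarith [hα.2])
  simpa only [hg_def, mul_assoc] using h_deriv
end
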